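/- Let F = ℚ(√d) with d = p₁···p_r < 0 squarefree, d ≡ 1 mod 4, each p_i a signed prime. Then cl(F)/2cl(F) ≅ (ℤ/2)^{r-1}, and it is isomorphic to Gal(F(√p₁,...,√p_r)/F). -/

import Mathlib

open NumberField

/-! Let `σ` be the nontrivial automorphism of `F`. Since `cl(F)` is finite, `cl(F)/2` and the
`2`-torsion `cl(F)[2]` have the same order, and the latter can be computed. If `I` has class of
order dividing `2`, Hilbert 90 replaces `I` by an ideal `J` in the same class with `σ J = J`. Such
a `J` is a product of ideals generated by integers and of the ramified primes `𝔭ᵢ`, where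
`𝔭ᵢ² = (pᵢ)`, so the classes of the `𝔭ᵢ` generate `cl(F)[2]`. If `∏_{i ∈ S} 𝔭ᵢ` is principal then
`∏_{i ∈ S} pᵢ` is a unit times a square, hence up to sign a square in `F`, which happens only for
`S = ∅` and for the full index set, where `∏ 𝔭ᵢ = (√d)`. So there is exactly one relation between
the `r` generators, and `cl(F)[2]` has order `2 ^ (r - 1)`.

On the Galois side the signs `g √pᵢ = χᵢ(g) √pᵢ` define characters that separate the points of the
Galois group, and `∏_{i ∈ S} χᵢ` is trivial exactly when `∏_{i ∈ S} pᵢ` is a square in `F`: the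
same single relation. -/

open scoped Pointwise nonZeroDivisors

section ElementaryAbelian

theorem quotient_range_powMonoidHom_pow_eq_one {G : Type*} [CommGroup G] {n : ℕ}
    (x : G ⧸ (powMonoidHom n : G →* G).range) : x ^ n = 1 := by
  obtain ⟨g, rfl⟩ := QuotientGroup.mk_surjective x
  rw [← QuotientGroup.mk_pow, QuotientGroup.eq_one_iff]
  exact ⟨g, rfl⟩

variable {ι : Type*} [Fintype ι]

theorem ker_linearCombination_eq_span_one {V : Type*} [AddCommGroup V] [Module (ZMod 2) V]
    {v : ι → V} (hv : ∀ S : Finset ι, ∑ i ∈ S, v i = 0 ↔ S = ∅ ∨ S = Finset.univ) :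
    (Fintype.linearCombination (ZMod 2) v).ker = Submodule.span (ZMod 2) {1} := by
  have hcases (a : ZMod 2) : a = 0 ∨ a = 1 := by revert a; decide
  ext c
  have hsum : ∑ i, c i • v i = ∑ i with c i = 1, v i := by
    rw [Finset.sum_filter]
    refine Finset.sum_congr rfl fun i _ => ?_
    obtain h | h := hcases (c i) <;> simp [h]
  have hzero : ({i | c i = 1} : Finset ι) = ∅ ↔ c = 0 := by
    simp only [Finset.filter_eq_empty_iff, Finset.mem_univ, true_imp_iff, funext_iff, Pi.zero_apply]
    refine forall_congr' fun i => ?_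
    obtain h | h := hcases (c i) <;> simp [h]
  have hone : ({i | c i = 1} : Finset ι) = Finset.univ ↔ c = 1 := by
    simp [Finset.filter_eq_self, funext_iff]
  rw [LinearMap.mem_ker, Fintype.linearCombination_apply, hsum, hv, hzero, hone,
    Submodule.mem_span_singleton]
  constructor
  · rintro (rfl | rfl)
    exacts [⟨0, zero_smul _ _⟩, ⟨1, one_smul _ _⟩]
  · rintro ⟨a, rfl⟩
    exact (hcases a).imp (fun h => by rw [h, zero_smul]) fun h => by rw [h, one_smul]

variable [Nonempty ι]

theorem finrank_eq_card_sub_one_of_sum_eq_zero_iff {V : Type*} [AddCommGroup V]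
    [Module (ZMod 2) V] {v : ι → V} (hspan : Submodule.span (ZMod 2) (Set.range v) = ⊤)
    (hv : ∀ S : Finset ι, ∑ i ∈ S, v i = 0 ↔ S = ∅ ∨ S = Finset.univ) :
    Module.finrank (ZMod 2) V = Fintype.card ι - 1 := by
  have h := (Fintype.linearCombination (ZMod 2) v).finrank_range_add_finrank_ker
  rw [Fintype.range_linearCombination, hspan, ker_linearCombination_eq_span_one hv, finrank_top,
    finrank_span_singleton one_ne_zero, Module.finrank_fintype_fun_eq_card] at h
  exact Nat.eq_sub_of_add_eq h

theorem card_closure_range_eq_two_pow_of_prod_eq_one_iff {G : Type*} [CommGroup G] {c : ι → G}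
    (hsq : ∀ i, c i ^ 2 = 1) (hc : ∀ S : Finset ι, ∏ i ∈ S, c i = 1 ↔ S = ∅ ∨ S = Finset.univ) :
    Nat.card (Subgroup.closure (Set.range c)) = 2 ^ (Fintype.card ι - 1) := by
  set H := Subgroup.closure (Set.range c)
  have hker : H ≤ (powMonoidHom 2 : G →* G).ker :=
    (Subgroup.closure_le _).mpr (Set.range_subset_iff.mpr hsq)
  have : Module (ZMod 2) (Additive H) :=
    AddCommGroup.zmodModule fun x => Subtype.ext (hker x.toMul.2)
  let v (i : ι) : Additive H := .ofMul ⟨c i, Subgroup.subset_closure ⟨i, rfl⟩⟩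
  have hspan : Submodule.span (ZMod 2) (Set.range v) = ⊤ := by
    refine eq_top_iff.mpr fun x _ => ?_
    refine Subgroup.closure_induction
      (p := fun y hy => Additive.ofMul (⟨y, hy⟩ : H) ∈ Submodule.span (ZMod 2) (Set.range v))
      ?_ (zero_mem _) (fun _ _ _ _ => add_mem) (fun _ _ => neg_mem) x.toMul.2
    rintro _ ⟨i, rfl⟩
    exact Submodule.subset_span ⟨i, rfl⟩
  have hv (S : Finset ι) : ∑ i ∈ S, v i = 0 ↔ S = ∅ ∨ S = Finset.univ := by
    rw [← hc, ← ofMul_prod, ofMul_eq_zero, ← OneMemClass.coe_eq_one, Subgroup.val_finsetProd]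
  have : Module.Finite (ZMod 2) (Additive H) :=
    Module.finite_def.mpr (Submodule.fg_def.mpr ⟨_, Set.finite_range v, hspan⟩)
  have h := Module.natCard_eq_pow_finrank (K := ZMod 2) (V := Additive H)
  rwa [finrank_eq_card_sub_one_of_sum_eq_zero_iff hspan hv, Nat.card_zmod] at h

theorem card_eq_two_pow_of_prod_characters_eq_one_iff {G : Type*} [CommGroup G] [Finite G]
    {χ : ι → G →* ℤˣ} (hχ : ∀ g, (∀ i, χ i g = 1) → g = 1)
    (hprod : ∀ S : Finset ι, ∏ i ∈ S, χ i = 1 ↔ S = ∅ ∨ S = Finset.univ) :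
    Nat.card G = 2 ^ (Fintype.card ι - 1) := by
  have : Module (ZMod 2) (Additive G) := AddCommGroup.zmodModule fun x =>
    hχ (x.toMul ^ 2) fun i => by rw [map_pow, Int.units_sq]
  let e : ℤˣ ≃* Multiplicative (ZMod 2) := mulEquivOfPrimeCardEq (p := 2) (by simp) (by simp)
  let f (i : ι) : Module.Dual (ZMod 2) (Additive G) :=
    AddMonoidHom.toZModLinearMap 2 (MonoidHom.toAdditiveLeft (e.toMonoidHom.comp (χ i)))
  have hf (S : Finset ι) (g : G) :
      (∑ i ∈ S, f i) (Additive.ofMul g) = (e ((∏ i ∈ S, χ i) g)).toAdd := by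
    rw [LinearMap.sum_apply, MonoidHom.finsetProd_apply, map_prod, toAdd_prod]
    rfl
  have hspan : Submodule.span (ZMod 2) (Set.range f) = ⊤ := by
    refine Submodule.span_eq_top_of_ne_zero fun g hg => ?_
    contrapose! hg
    refine hχ g.toMul fun i => e.map_eq_one_iff.mp ?_
    exact hg (f i) ⟨i, rfl⟩
  have hsum (S : Finset ι) : ∑ i ∈ S, f i = 0 ↔ S = ∅ ∨ S = Finset.univ := by
    rw [← hprod, LinearMap.ext_iff, MonoidHom.ext_iff]
    refine Additive.forall.trans (forall_congr' fun g => ?_)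
    rw [hf, LinearMap.zero_apply, toAdd_eq_zero, e.map_eq_one_iff, MonoidHom.one_apply]
  have h := Module.natCard_eq_pow_finrank (K := ZMod 2) (V := Additive G)
  rwa [← Subspace.dual_finrank_eq, finrank_eq_card_sub_one_of_sum_eq_zero_iff hspan hsum,
    Nat.card_zmod] at h

theorem nonempty_mulEquiv_pi_zmod_of_card_eq {G : Type*} [CommGroup G] [Finite G] {q n : ℕ}
    [Fact q.Prime] (hpow : ∀ x : G, x ^ q = 1) (hcard : Nat.card G = q ^ n) :
    Nonempty (G ≃* (Fin n → Multiplicative (ZMod q))) := by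
  have : Module (ZMod q) (Additive G) := AddCommGroup.zmodModule fun x => hpow x.toMul
  have : Module.Finite (ZMod q) (Additive G) := .of_finite
  have hrank : Module.finrank (ZMod q) (Additive G) = n := by
    have h := Module.natCard_eq_pow_finrank (K := ZMod q) (V := Additive G)
    rw [Nat.card_zmod, Nat.card_congr Additive.toMul, hcard] at h
    exact (Nat.pow_right_injective (Fact.out : q.Prime).two_le h).symm
  let b := Module.finBasisOfFinrankEq (ZMod q) (Additive G) hrank
  exact ⟨(AddEquiv.toMultiplicativeRight b.equivFun.toAddEquiv).trans (MulEquiv.piMultiplicative _)⟩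

theorem nonempty_mulEquiv_pi_of_prod_characters_eq_one_iff {G : Type*} [Group G] [Finite G]
    {χ : ι → G →* ℤˣ} (hχ : ∀ g, (∀ i, χ i g = 1) → g = 1)
    (hprod : ∀ S : Finset ι, ∏ i ∈ S, χ i = 1 ↔ S = ∅ ∨ S = Finset.univ) :
    Nonempty (G ≃* (Fin (Fintype.card ι - 1) → Multiplicative (ZMod 2))) := by
  have hsq (g : G) : g ^ 2 = 1 := hχ _ fun i => by rw [map_pow, Int.units_sq]
  let _ : CommGroup G :=
    { ‹Group G› with
      mul_comm := Commute.of_orderOf_dvd_two fun g => orderOf_dvd_of_pow_eq_one (hsq g) }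
  exact nonempty_mulEquiv_pi_zmod_of_card_eq hsq
    (card_eq_two_pow_of_prod_characters_eq_one_iff hχ hprod)

end ElementaryAbelian

section CommRing

theorem smul_intCast {G R : Type*} [Monoid G] [Ring R] [MulSemiringAction G R] (g : G) (n : ℤ) :
    g • (n : R) = n :=
  map_intCast (MulSemiringAction.toRingHom G R g) n

theorem smul_span_singleton {G R : Type*} [Monoid G] [CommRing R] [MulSemiringAction G R] (g : G)
    (x : R) : g • Ideal.span {x} = Ideal.span {g • x} := by
  rw [Ideal.pointwise_smul_def, Ideal.map_span, Set.image_singleton,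
    MulSemiringAction.toRingHom_apply]

theorem absNorm_smul {F : Type*} [Field F] [NumberField F] (σ : Gal(F/ℚ)) (I : Ideal (𝓞 F)) :
    Ideal.absNorm (σ • I) = Ideal.absNorm I := by
  rw [← Ideal.absNorm_relNorm ℤ, Ideal.relNorm_smul, Ideal.absNorm_relNorm]

theorem exists_sub_intCast_mem {R : Type*} [CommRing R] [IsDedekindDomain R] [Module.Free ℤ R]
    {Q : Ideal R} (hQ : (Ideal.absNorm Q).Prime) (x : R) : ∃ n : ℤ, x - n ∈ Q := by
  have : Finite (R ⧸ Q) := Nat.finite_of_card_ne_zero hQ.ne_zero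
  let _ := Fintype.ofFinite (R ⧸ Q)
  let e := ZMod.ringEquivOfPrime (R ⧸ Q) hQ Nat.card_eq_fintype_card.symm
  obtain ⟨n, hn⟩ := ZMod.intCast_surjective (e.symm (Ideal.Quotient.mk Q x))
  refine ⟨n, Ideal.Quotient.eq.mp ?_⟩
  rw [map_intCast, ← map_intCast e, hn, e.apply_symm_apply]

theorem isSquare_algebraMap_iff {R K : Type*} [CommRing R] [IsIntegrallyClosed R] [Field K]
    [Algebra R K] [IsFractionRing R K] {x : R} :
    IsSquare (algebraMap R K x) ↔ IsSquare x := by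
  refine ⟨fun ⟨y, hy⟩ => ?_, fun h => h.map _⟩
  rw [← sq] at hy
  obtain ⟨z, rfl⟩ := IsIntegrallyClosed.exists_algebraMap_eq_of_isIntegral_pow two_pos
    (hy ▸ isIntegral_algebraMap : IsIntegral R (y ^ 2))
  exact ⟨z, IsFractionRing.injective R K (by rw [hy, ← sq, map_pow])⟩

theorem dvd_of_sq_sub_mul_add_eq_zero {R : Type*} [CommRing R] [IsDomain R] [IsIntegrallyClosed R]
    {e g t n : R} (h : e ^ 2 - g * t * e + g ^ 2 * n = 0) : g ∣ e := by
  obtain rfl | hg := eq_or_ne g 0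
  · have he : e = 0 := by simpa using h
    rw [he]
  have hgK : algebraMap R (FractionRing R) g ≠ 0 := by simpa using hg
  have hint : IsIntegral R (algebraMap R (FractionRing R) e / algebraMap R _ g) := by
    refine ⟨.X ^ 2 - .C t * .X + .C n, by monicity!, ?_⟩
    have hK := congrArg (algebraMap R (FractionRing R)) h
    simp only [map_add, map_sub, map_mul, map_pow, map_zero] at hK
    simp only [Polynomial.eval₂_add, Polynomial.eval₂_sub, Polynomial.eval₂_mul,
      Polynomial.eval₂_pow, Polynomial.eval₂_X, Polynomial.eval₂_C]
    field_simp
    linear_combination hK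
  obtain ⟨y, hy⟩ := IsIntegrallyClosed.isIntegral_iff.mp hint
  refine ⟨y, IsFractionRing.injective R (FractionRing R) ?_⟩
  rw [map_mul, hy, mul_div_cancel₀ _ hgK]

-- `x * σ • y` is a root of a quadratic polynomial with trace in `(g)` and norm in `(g ^ 2)`.
theorem dvd_mul_smul_of_dvd_mul_smul_self {G R : Type*} [Monoid G] [CommRing R] [IsDomain R]
    [IsIntegrallyClosed R] [MulSemiringAction G R] {σ : G} {x y g : R} (hx : g ∣ x * σ • x)
    (hy : g ∣ y * σ • y) (hxy : g ∣ (x + y) * σ • (x + y)) : g ∣ x * σ • y := by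
  obtain ⟨a, ha⟩ := hx
  obtain ⟨b, hb⟩ := hy
  obtain ⟨c, hc⟩ := hxy
  rw [smul_add] at hc
  refine dvd_of_sq_sub_mul_add_eq_zero (t := c - a - b) (n := a * b) ?_
  linear_combination (x * σ • y) * (hc - ha - hb) - y * σ • y * ha - g * a * hb

theorem span_pair_sq_eq_span_singleton {R : Type*} [CommRing R] {n m a : R} (hnm : IsCoprime n m)
    (ha : a ^ 2 = n * m) : Ideal.span {n, a} ^ 2 = Ideal.span {n} := by
  obtain ⟨u, v, huv⟩ := hnm
  rw [sq, Ideal.span_pair_mul_span_pair]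
  refine le_antisymm (Ideal.span_le.mpr ?_) ((Ideal.span_singleton_le_iff_mem _).mpr ?_)
  · rintro _ (rfl | rfl | rfl | rfl) <;> refine Ideal.mem_span_singleton.mpr ?_
    exacts [dvd_mul_right n n, dvd_mul_right n a, dvd_mul_left n a, ⟨m, by rw [← ha, sq]⟩]
  · have hn : n = u * (n * n) + v * (a * a) := by linear_combination n * (-huv) - v * ha
    have hmem : u * (n * n) + v * (a * a) ∈ Ideal.span {n * n, n * a, a * n, a * a} :=
      add_mem (Ideal.mul_mem_left _ _ (Ideal.subset_span (by simp)))
        (Ideal.mul_mem_left _ _ (Ideal.subset_span (by simp)))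
    rwa [← hn] at hmem

theorem mk0_eq_mk0_of_eq_span_mul {R : Type*} [CommRing R] [IsDedekindDomain R]
    {I J : (Ideal R)⁰} {x : R} (h : (I : Ideal R) = Ideal.span {x} * J) :
    ClassGroup.mk0 I = ClassGroup.mk0 J := by
  refine ClassGroup.mk0_eq_mk0_iff.mpr ⟨1, x, one_ne_zero, ?_, ?_⟩
  · rintro rfl
    exact nonZeroDivisors.coe_ne_zero I (by simpa using h)
  · rw [h, Ideal.span_singleton_one, Ideal.top_mul]

theorem mk0_sq_eq_one_of_sq_eq_span {R : Type*} [CommRing R] [IsDedekindDomain R]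
    {I : (Ideal R)⁰} {x : R} (h : (I : Ideal R) ^ 2 = Ideal.span {x}) :
    ClassGroup.mk0 I ^ 2 = 1 := by
  rw [← map_pow, ClassGroup.mk0_eq_one_iff (Subtype.mem _), SubmonoidClass.coe_pow, h]
  exact ⟨x, rfl⟩

theorem prod_sq_eq_span {ι R : Type*} [CommRing R] {I : ι → Ideal R} {x : ι → R}
    (h : ∀ i, I i ^ 2 = Ideal.span {x i}) (S : Finset ι) :
    (∏ i ∈ S, I i) ^ 2 = Ideal.span {∏ i ∈ S, x i} := by
  rw [← Finset.prod_pow, ← Ideal.prod_span_singleton]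
  exact Finset.prod_congr rfl fun i _ => h i

theorem eq_empty_or_eq_univ_of_isUnit_or_associated_prod {ι M : Type*} [CommMonoidWithZero M]
    [IsCancelMulZero M] [Nontrivial M] [Fintype ι] {p : ι → M} (hp : ∀ i, Prime (p i))
    {S : Finset ι} (h : IsUnit (∏ i ∈ S, p i) ∨ Associated (∏ i ∈ S, p i) (∏ i, p i)) :
    S = ∅ ∨ S = Finset.univ := by
  classical
  have eq_empty {T : Finset ι} (hT : IsUnit (∏ i ∈ T, p i)) : T = ∅ :=
    Finset.eq_empty_of_forall_notMem fun i hi => (hp i).not_isUnit (IsUnit.prod_iff.mp hT i hi)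
  refine h.imp eq_empty fun hS => Finset.compl_eq_empty_iff _ |>.mp (eq_empty ?_)
  obtain ⟨u, hu⟩ := hS
  rw [← Finset.prod_mul_prod_compl S p] at hu
  rw [← mul_left_cancel₀ (Finset.prod_ne_zero_iff.mpr fun i _ => (hp i).ne_zero) hu]
  exact u.isUnit

end CommRing

section QuadraticField

variable {F : Type*} [Field F] [NumberField F] {σ : Gal(F/ℚ)} {α : 𝓞 F} {d : ℤ}

theorem ne_one_of_smul_eq_neg (hd : d ≠ 0) (hα : α ^ 2 = d) (hσ : σ • α = -α) : σ ≠ 1 := by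
  rintro rfl
  rw [one_smul, self_eq_neg] at hσ
  rw [hσ, zero_pow two_ne_zero] at hα
  exact hd (by exact_mod_cast hα.symm)

theorem exists_sq_eq_span_of_dvd (hsf : Squarefree d) (hα : α ^ 2 = d) {n : ℤ} (hn : n ∣ d) :
    ∃ I : (Ideal (𝓞 F))⁰, (I : Ideal (𝓞 F)) ^ 2 = Ideal.span {(n : 𝓞 F)} := by
  obtain ⟨m, rfl⟩ := hn
  have hnm : IsCoprime (n : 𝓞 F) m := (squarefree_mul_iff.mp hsf).1.isCoprime.intCast
  rw [Int.cast_mul] at hα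
  have hsq := span_pair_sq_eq_span_singleton hnm hα
  have hn0 : Ideal.span {(n : 𝓞 F)} ≠ 0 := by simpa using left_ne_zero_of_mul hsf.ne_zero
  exact ⟨⟨_, mem_nonZeroDivisors_of_ne_zero (ne_zero_pow two_ne_zero (hsq ▸ hn0))⟩, hsq⟩

theorem sub_smul_mem {Q : Ideal (𝓞 F)} (hQ : (Ideal.absNorm Q).Prime) (hσQ : σ • Q = Q)
    (x : 𝓞 F) : x - σ • x ∈ Q := by
  obtain ⟨n, hn⟩ := exists_sub_intCast_mem hQ x
  have h := Ideal.smul_mem_pointwise_smul σ _ _ hn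
  rw [hσQ, smul_sub, smul_intCast] at h
  simpa only [sub_sub_sub_cancel_right] using sub_mem hn h

theorem exists_sub_smul_eq_of_emod_four_eq_one (hα : α ^ 2 = d) (hσ : σ • α = -α)
    (hd : d % 4 = 1) : ∃ w : 𝓞 F, w - σ • w = α := by
  obtain ⟨w, hw⟩ : (2 : 𝓞 F) ∣ 1 + α := by
    obtain ⟨m, hm⟩ : ∃ m, d = 4 * m + 1 := ⟨d / 4, by omega⟩
    refine dvd_of_sq_sub_mul_add_eq_zero (t := 1) (n := -m) ?_
    rw [hm] at hα
    push_cast at hα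
    linear_combination hα
  rw [two_mul] at hw
  refine ⟨w, mul_left_cancel₀ (two_ne_zero (α := 𝓞 F)) ?_⟩
  have hσw := congrArg (σ • ·) hw
  simp only [smul_add, smul_one, hσ] at hσw
  linear_combination hσw - hw

theorem mem_of_smul_eq_of_emod_four_ne_three (hα : α ^ 2 = d) (hσ : σ • α = -α)
    (hd : d % 4 ≠ 3) {Q : Ideal (𝓞 F)} [Q.IsPrime] (hQ : (Ideal.absNorm Q).Prime)
    (hσQ : σ • Q = Q) : α ∈ Q := by
  obtain h2 | h1 : 2 ∣ d ∨ d % 4 = 1 := by omega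
  · have hα2 : 2 * α ∈ Q := by
      simpa only [hσ, sub_neg_eq_add, ← two_mul] using sub_smul_mem hQ hσQ α
    refine (Ideal.IsPrime.mem_or_mem ‹_› hα2).elim (fun h => ?_) id
    refine Ideal.IsPrime.mem_of_pow_mem ‹_› 2 ?_
    rw [hα]
    exact Q.mem_of_dvd (by exact_mod_cast Int.cast_dvd_cast (α := 𝓞 F) 2 d h2) h
  · obtain ⟨w, rfl⟩ := exists_sub_smul_eq_of_emod_four_eq_one hα hσ h1
    exact sub_smul_mem hQ hσQ w

theorem exists_isPrime_and_dvd_of_smul_eq {I : Ideal (𝓞 F)} (hI0 : I ≠ ⊥) (hI1 : I ≠ ⊤)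
    (hI : σ • I = I) :
    ∃ Q : Ideal (𝓞 F), Q.IsPrime ∧ (σ • Q = Q ∧ Q ∣ I ∨ Q * σ • Q ∣ I) := by
  obtain ⟨Q, hQ, hIQ⟩ := Ideal.exists_le_maximal I hI1
  refine ⟨Q, hQ.isPrime, ?_⟩
  obtain h | h := eq_or_ne (σ • Q) Q
  · exact .inl ⟨h, Ideal.dvd_iff_le.mpr hIQ⟩
  have hQ0 : σ • Q ≠ ⊥ := by
    rintro h0
    exact hI0 (le_bot_iff.mp (h0 ▸ hI ▸ smul_mono_right σ hIQ))
  have hσQ : (σ • Q).IsMaximal := (hQ.isPrime.smul σ).isMaximal hQ0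
  have hσQI : σ • Q ∣ I := Ideal.dvd_iff_le.mpr (hI ▸ smul_mono_right σ hIQ)
  exact .inr ((Ideal.isCoprime_of_isMaximal h.symm).mul_dvd (Ideal.dvd_iff_le.mpr hIQ) hσQI)

variable [Algebra.IsQuadraticExtension ℚ F]

variable (F) in
theorem card_gal_eq_two : Nat.card Gal(F/ℚ) = 2 := by
  rw [IsGalois.card_aut_eq_finrank, Algebra.IsQuadraticExtension.finrank_eq_two]

theorem absNorm_span_natCast_eq_sq (n : ℕ) : Ideal.absNorm (Ideal.span {(n : 𝓞 F)}) = n ^ 2 := by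
  rw [Ideal.absNorm_span_natCast, RingOfIntegers.rank,
    Algebra.IsQuadraticExtension.finrank_eq_two]

theorem gal_eq_one_or_eq (hσ : σ ≠ 1) (τ : Gal(F/ℚ)) : τ = 1 ∨ τ = σ := by
  obtain ⟨τ', -, hτ'⟩ := (Nat.card_eq_two_iff' (1 : Gal(F/ℚ))).mp (card_gal_eq_two F)
  exact or_iff_not_imp_left.mpr fun h => (hτ' τ h).trans (hτ' σ hσ).symm

theorem gal_smul_smul {X : Type*} [MulAction Gal(F/ℚ) X] (σ : Gal(F/ℚ)) (x : X) :
    σ • σ • x = x := by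
  rw [smul_smul, ← sq, ← card_gal_eq_two F, pow_card_eq_one', one_smul]

theorem exists_intCast_eq_of_smul_eq (hσ : σ ≠ 1) {x : 𝓞 F} (hx : σ • x = x) :
    ∃ n : ℤ, (n : 𝓞 F) = x :=
  Algebra.IsInvariant.isInvariant (G := Gal(F/ℚ)) x fun τ => by
    obtain rfl | rfl := gal_eq_one_or_eq hσ τ
    exacts [one_smul _ x, hx]

theorem exists_smul_eq_neg_of_not_isSquare (hα : α ^ 2 = d) (hd : ¬ IsSquare d) :
    ∃ σ : Gal(F/ℚ), σ • α = -α := by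
  obtain ⟨σ, hσ, -⟩ := (Nat.card_eq_two_iff' (1 : Gal(F/ℚ))).mp (card_gal_eq_two F)
  refine ⟨σ, (sq_eq_sq_iff_eq_or_eq_neg.mp ?_).resolve_left fun h => hd ?_⟩
  · rw [← smul_pow', hα, smul_intCast]
  · obtain ⟨n, rfl⟩ := exists_intCast_eq_of_smul_eq hσ h
    exact ⟨n, by rw [← sq]; exact_mod_cast hα.symm⟩

theorem isUnit_or_associated_of_isSquare (hsf : Squarefree d) (hα : α ^ 2 = d)
    (hσ : σ • α = -α) {n : ℤ} (hn : n ∣ d) (hsq : IsSquare (n : 𝓞 F)) :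
    IsUnit n ∨ Associated n d := by
  have isUnit_of_sq {m k : ℤ} (hm : m ∣ d) (h : k ^ 2 = m) : IsUnit m := by
    rw [← h]
    exact (hsf k (by rwa [← sq, h])).pow 2
  have hσ1 := ne_one_of_smul_eq_neg hsf.ne_zero hα hσ
  obtain ⟨z, hz⟩ := hsq
  have hσz : (σ • z) ^ 2 = z ^ 2 := by
    rw [← smul_pow', sq z, ← hz, smul_intCast]
  obtain h | h := sq_eq_sq_iff_eq_or_eq_neg.mp hσz
  · obtain ⟨k, rfl⟩ := exists_intCast_eq_of_smul_eq hσ1 h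
    exact .inl (isUnit_of_sq (k := k) hn (by rw [sq]; exact_mod_cast hz.symm))
  · obtain ⟨k, hk⟩ := exists_intCast_eq_of_smul_eq hσ1 (x := z * α)
      (by rw [smul_mul', h, hσ, neg_mul_neg])
    obtain ⟨m, rfl⟩ := hn
    have hk2 : k ^ 2 = n ^ 2 * m := by
      have : (k : 𝓞 F) ^ 2 = n ^ 2 * m := by
        rw [hk, mul_pow, hα, sq z, ← hz]
        push_cast
        ring
      exact_mod_cast this
    obtain ⟨l, rfl⟩ := (Int.pow_dvd_pow_iff two_ne_zero).mp (Dvd.intro _ hk2.symm)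
    have hm : IsUnit m := isUnit_of_sq (Dvd.intro_left _ rfl)
      (mul_left_cancel₀ (pow_ne_zero 2 (left_ne_zero_of_mul hsf.ne_zero)) (by rw [← mul_pow, hk2]))
    exact .inr (associated_mul_unit_right n m hm)

/-! ### Norms of elements and ideals -/

theorem trace_sq_sub_four_mul_norm_nonpos (hd : d < 0) (hα : α ^ 2 = d) (hσ : σ • α = -α)
    {x : 𝓞 F} {t n : ℤ} (ht : x + σ • x = t) (hn : x * σ • x = n) : t ^ 2 - 4 * n ≤ 0 := by
  obtain ⟨c, hc⟩ := exists_intCast_eq_of_smul_eq (ne_one_of_smul_eq_neg hd.ne hα hσ)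
    (x := α * (x - σ • x)) (by rw [smul_mul', smul_sub, gal_smul_smul, hσ]; ring)
  have hc2 : c ^ 2 = d * (t ^ 2 - 4 * n) := by
    have : (c : 𝓞 F) ^ 2 = d * (t ^ 2 - 4 * n) := by
      rw [hc, ← ht, ← hn, ← hα]
      ring
    exact_mod_cast this
  nlinarith [sq_nonneg c]

theorem exists_add_smul_eq_intCast (hσ : σ ≠ 1) (x : 𝓞 F) : ∃ t : ℤ, x + σ • x = t := by
  obtain ⟨t, ht⟩ := exists_intCast_eq_of_smul_eq hσ (x := x + σ • x)
    (by rw [smul_add, gal_smul_smul, add_comm])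
  exact ⟨t, ht.symm⟩

theorem exists_mul_smul_eq_intCast (hσ : σ ≠ 1) (x : 𝓞 F) : ∃ n : ℤ, x * σ • x = n := by
  obtain ⟨n, hn⟩ := exists_intCast_eq_of_smul_eq hσ (x := x * σ • x)
    (by rw [smul_mul', gal_smul_smul, mul_comm])
  exact ⟨n, hn.symm⟩

theorem mul_smul_eq_absNorm_span (hd : d < 0) (hα : α ^ 2 = d) (hσ : σ • α = -α) (x : 𝓞 F) :
    x * σ • x = Ideal.absNorm (Ideal.span {x}) := by
  have hσ1 := ne_one_of_smul_eq_neg hd.ne hα hσ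
  obtain ⟨t, ht⟩ := exists_add_smul_eq_intCast hσ1 x
  obtain ⟨n, hn⟩ := exists_mul_smul_eq_intCast hσ1 x
  have hn0 : 0 ≤ n := by
    nlinarith [trace_sq_sub_four_mul_norm_nonpos hd hα hσ ht hn, sq_nonneg t]
  lift n to ℕ using hn0
  rw [Int.cast_natCast] at hn
  have hspan : Ideal.span {x} * σ • Ideal.span {x} = Ideal.span {(n : 𝓞 F)} := by
    rw [smul_span_singleton, Ideal.span_singleton_mul_span_singleton, hn]
  have hnorm := congrArg Ideal.absNorm hspan
  rw [map_mul, absNorm_smul, absNorm_span_natCast_eq_sq, ← sq] at hnorm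
  rw [Nat.pow_left_injective two_ne_zero hnorm, hn]

theorem mul_smul_eq_span_absNorm (hσ : σ ≠ 1) (I : Ideal (𝓞 F)) :
    I * σ • I = Ideal.span {(Ideal.absNorm I : 𝓞 F)} := by
  let N : Ideal ℤ := Ideal.span {m | ∃ x ∈ I, x * σ • x = m}
  obtain ⟨g, hg⟩ := (IsPrincipalIdealRing.principal N).principal
  rw [Ideal.submodule_span_eq] at hg
  have hnorm (x : 𝓞 F) (hx : x ∈ I) : (g : 𝓞 F) ∣ x * σ • x := by
    obtain ⟨m, hm⟩ := exists_mul_smul_eq_intCast hσ x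
    have hmN : m ∈ N := Ideal.subset_span ⟨x, hx, hm⟩
    rw [hg, Ideal.mem_span_singleton] at hmN
    obtain ⟨n, rfl⟩ := hmN
    exact ⟨n, by rw [hm, Int.cast_mul]⟩
  have hle : I * σ • I ≤ Ideal.span {(g : 𝓞 F)} := by
    rw [Ideal.pointwise_smul_def]
    refine Ideal.mul_le.mpr fun x hx z hz => ?_
    obtain ⟨y, hy, rfl⟩ :=
      (Ideal.mem_map_of_equiv (MulSemiringAction.toRingEquiv _ (𝓞 F) σ) z).mp hz
    exact Ideal.mem_span_singleton.mpr (dvd_mul_smul_of_dvd_mul_smul_self (hnorm x hx) (hnorm y hy)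
      (hnorm (x + y) (add_mem hx hy)))
  have hge : N ≤ (I * σ • I).comap (Int.castRingHom (𝓞 F)) := by
    refine Ideal.span_le.mpr ?_
    rintro m ⟨x, hx, hm⟩
    refine Ideal.mem_comap.mpr ?_
    rw [eq_intCast, ← hm]
    exact Ideal.mul_mem_mul hx (Ideal.smul_mem_pointwise_smul σ x I hx)
  have hspan : I * σ • I = Ideal.span {(g.natAbs : 𝓞 F)} := by
    have h := (Int.associated_natAbs g).map (Int.castRingHom (𝓞 F))
    rw [eq_intCast, eq_intCast, Int.cast_natCast] at h
    rw [← Ideal.span_singleton_eq_span_singleton.mpr h]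
    refine hle.antisymm ((Ideal.span_singleton_le_iff_mem _).mpr ?_)
    exact hge (hg ▸ Ideal.mem_span_singleton_self g)
  have h := congrArg Ideal.absNorm hspan
  rw [map_mul, absNorm_smul, absNorm_span_natCast_eq_sq, ← sq] at h
  rw [hspan, Nat.pow_left_injective two_ne_zero h]

/-! ### Ambiguous ideals -/

-- Hilbert 90 for `x / y`, with denominators cleared.
theorem exists_mul_smul_eq_mul (hα : α ≠ 0) (hσ : σ • α = -α) {x y : 𝓞 F} (hy : y ≠ 0)
    (h : x * σ • x = y * σ • y) : ∃ w ≠ 0, x * σ • w = y * w := by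
  by_cases hxy : x + y = 0
  · exact ⟨α, hα, by rw [hσ, eq_neg_of_add_eq_zero_left hxy, neg_mul_neg]⟩
  · refine ⟨σ • y * (x + y), mul_ne_zero ((smul_ne_zero_iff_ne σ).mpr hy) hxy, ?_⟩
    rw [smul_mul', gal_smul_smul, smul_add]
    linear_combination y * h

theorem span_eq_or_sq_eq_span_of_smul_eq (hσ : σ ≠ 1) {Q : Ideal (𝓞 F)} [Q.IsPrime] (hQ0 : Q ≠ ⊥)
    (hQ : σ • Q = Q) :
    ∃ q : ℕ, q.Prime ∧ (Q = Ideal.span {(q : 𝓞 F)} ∨ Q ^ 2 = Ideal.span {(q : 𝓞 F)}) := by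
  have hnorm : Q ^ 2 = Ideal.span {(Ideal.absNorm Q : 𝓞 F)} := by
    rw [← mul_smul_eq_span_absNorm hσ, hQ, sq]
  have hN1 : Ideal.absNorm Q ≠ 1 := fun h => Ideal.IsPrime.ne_top' (Ideal.absNorm_eq_one_iff.mp h)
  obtain ⟨q, hq, hqN⟩ := Nat.exists_prime_and_dvd hN1
  have hdvd : Ideal.span {(q : 𝓞 F)} ∣ Q ^ 2 := by
    rw [hnorm, Ideal.dvd_span_singleton, Ideal.mem_span_singleton]
    exact Nat.cast_dvd_cast hqN
  obtain ⟨k, hk, hqk⟩ := (dvd_prime_pow (Ideal.prime_of_isPrime hQ0 ‹_›) 2).mp hdvd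
  rw [associated_iff_eq] at hqk
  refine ⟨q, hq, ?_⟩
  interval_cases k
  · have h := congrArg Ideal.absNorm hqk
    rw [absNorm_span_natCast_eq_sq, pow_zero, map_one] at h
    exact absurd ((Nat.pow_eq_one.mp h).resolve_right two_ne_zero) hq.ne_one
  · exact .inl (by rw [hqk, pow_one])
  · exact .inr hqk.symm

theorem absNorm_eq_of_sq_eq_span {I : Ideal (𝓞 F)} {n : ℕ} (hI : I ^ 2 = Ideal.span {(n : 𝓞 F)}) :
    Ideal.absNorm I = n := by
  have h := congrArg Ideal.absNorm hI
  rw [map_pow, absNorm_span_natCast_eq_sq] at h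
  exact Nat.pow_left_injective two_ne_zero h

theorem dvd_of_mem_of_sq_eq_span (hd : d < 0) (hα : α ^ 2 = d) (hσ : σ • α = -α)
    {Q : Ideal (𝓞 F)} {q : ℕ} (hQ : Q ^ 2 = Ideal.span {(q : 𝓞 F)}) (hαQ : α ∈ Q) :
    (q : ℤ) ∣ d := by
  have hnorm : (d : 𝓞 F) = (-(Ideal.absNorm (Ideal.span {α}) : ℤ) : ℤ) := by
    push_cast
    rw [← mul_smul_eq_absNorm_span hd hα hσ, hσ, mul_neg, neg_neg, ← sq, hα]
  rw [Int.cast_injective hnorm, dvd_neg, Int.natCast_dvd_natCast, ← absNorm_eq_of_sq_eq_span hQ]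
  exact Ideal.absNorm_dvd_absNorm_of_le ((Ideal.span_singleton_le_iff_mem _).mpr hαQ)

theorem exists_smul_eq_and_mk0_eq_of_sq_eq_one (hd : d < 0) (hα : α ^ 2 = d) (hσ : σ • α = -α)
    {c : ClassGroup (𝓞 F)} (hc : c ^ 2 = 1) :
    ∃ J : (Ideal (𝓞 F))⁰, σ • (J : Ideal (𝓞 F)) = J ∧ ClassGroup.mk0 J = c := by
  obtain ⟨I, rfl⟩ := ClassGroup.mk0_surjective c
  rw [sq, mul_eq_one_iff_eq_inv] at hc
  obtain ⟨x, hx0, hx⟩ := ClassGroup.mk0_eq_mk0_inv_iff.mp hc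
  set N : ℕ := Ideal.absNorm (I : Ideal (𝓞 F))
  have hN : (I : Ideal (𝓞 F)) * σ • (I : Ideal (𝓞 F)) = Ideal.span {(N : 𝓞 F)} :=
    mul_smul_eq_span_absNorm (ne_one_of_smul_eq_neg hd.ne hα hσ) I
  have hσI : Ideal.span {x} * σ • (I : Ideal (𝓞 F)) = Ideal.span {(N : 𝓞 F)} * I := by
    rw [← hx, mul_assoc, hN, mul_comm]
  have hnorm : (N : 𝓞 F) * σ • (N : 𝓞 F) = x * σ • x := by
    rw [mul_smul_eq_absNorm_span hd hα hσ x, mul_smul_eq_absNorm_span hd hα hσ, ← hx, map_mul,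
      absNorm_span_natCast_eq_sq, sq]
  have hα0 : α ≠ 0 := by
    rintro rfl
    rw [zero_pow two_ne_zero] at hα
    exact hd.ne (by exact_mod_cast hα.symm)
  obtain ⟨w, hw0, hw⟩ := exists_mul_smul_eq_mul hα0 hσ hx0 hnorm
  let J : (Ideal (𝓞 F))⁰ := ⟨Ideal.span {w} * I, mul_mem (by simpa using hw0) I.2⟩
  refine ⟨J, ?_, mk0_eq_mk0_of_eq_span_mul rfl⟩
  have hN0 : Ideal.span {(N : 𝓞 F)} ≠ 0 := by
    simpa [N, Ideal.absNorm_eq_zero_iff] using nonZeroDivisors.coe_ne_zero I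
  refine mul_left_cancel₀ hN0 ?_
  calc Ideal.span {(N : 𝓞 F)} * σ • (Ideal.span {w} * (I : Ideal (𝓞 F)))
      = Ideal.span {w} * (Ideal.span {x} * σ • (I : Ideal (𝓞 F))) := by
        rw [smul_mul', smul_span_singleton, ← mul_assoc, ← mul_assoc,
          Ideal.span_singleton_mul_span_singleton, Ideal.span_singleton_mul_span_singleton, hw,
          mul_comm x]
    _ = Ideal.span {(N : 𝓞 F)} * (Ideal.span {w} * I) := by rw [hσI, mul_left_comm]

theorem isSquare_or_isSquare_neg_of_isUnit (hd : d < 0) (hd' : ¬ IsSquare (-d)) (hα : α ^ 2 = d)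
    (hσ : σ • α = -α) {u : 𝓞 F} (hu : IsUnit u) : IsSquare u ∨ IsSquare (-u) := by
  have hσ1 := ne_one_of_smul_eq_neg hd.ne hα hσ
  have hnorm : u * σ • u = 1 := by
    rw [mul_smul_eq_absNorm_span hd hα hσ, Ideal.span_singleton_eq_top.mpr hu, Ideal.absNorm_top,
      Nat.cast_one]
  obtain ⟨t, ht⟩ := exists_add_smul_eq_intCast hσ1 u
  have hquad : u ^ 2 = t * u - 1 := by linear_combination u * ht - hnorm
  have ht2 : t ^ 2 - 4 * 1 ≤ 0 :=
    trace_sq_sub_four_mul_norm_nonpos hd hα hσ ht (by rw [hnorm, Int.cast_one])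
  have hlow : -2 ≤ t := by nlinarith
  have hupp : t ≤ 2 := by nlinarith
  interval_cases t <;> push_cast at hquad ht
  · have hu1 : u + 1 = 0 := by
      refine pow_eq_zero_iff two_ne_zero |>.mp ?_
      linear_combination hquad
    exact .inr ⟨1, by linear_combination -hu1⟩
  · exact .inl ⟨u ^ 2, by linear_combination (u - u ^ 2) * hquad⟩
  · obtain ⟨k, hk⟩ := exists_intCast_eq_of_smul_eq hσ1 (x := u * α) (by
      rw [smul_mul', hσ]
      linear_combination (-α) * ht)
    refine absurd ⟨k, ?_⟩ hd'
    have : (-d : 𝓞 F) = k * k := by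
      rw [hk]
      linear_combination (-u ^ 2) * hα - d * hquad
    exact_mod_cast this
  · exact .inr ⟨u ^ 2, by linear_combination (-u - u ^ 2) * hquad⟩
  · have hu1 : u - 1 = 0 := by
      refine pow_eq_zero_iff two_ne_zero |>.mp ?_
      linear_combination hquad
    exact .inl ⟨1, by linear_combination hu1⟩

theorem mk0_mem_of_smul_eq (hσ : σ ≠ 1) {H : Subgroup (ClassGroup (𝓞 F))}
    (hH : ∀ Q : (Ideal (𝓞 F))⁰, (Q : Ideal (𝓞 F)).IsPrime → σ • (Q : Ideal (𝓞 F)) = Q →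
      ClassGroup.mk0 Q ∈ H)
    {I : (Ideal (𝓞 F))⁰} (hI : σ • (I : Ideal (𝓞 F)) = I) : ClassGroup.mk0 I ∈ H := by
  obtain ⟨I, hI0⟩ := I
  induction I using (wellFounded_dvdNotUnit (α := Ideal (𝓞 F))).induction with | _ I ih
  by_cases hI1 : I = ⊤
  · subst hI1
    exact (ClassGroup.mk0_eq_one_iff hI0).mpr top_isPrincipal ▸ one_mem H
  obtain ⟨A, hA1, hσA, hAI, hAH⟩ : ∃ A : (Ideal (𝓞 F))⁰, (A : Ideal (𝓞 F)) ≠ ⊤ ∧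
      σ • (A : Ideal (𝓞 F)) = A ∧ (A : Ideal (𝓞 F)) ∣ I ∧ ClassGroup.mk0 A ∈ H := by
    have hI0' := nonZeroDivisors.ne_zero hI0
    have mem_of_dvd {A : Ideal (𝓞 F)} (hA : A ∣ I) : A ∈ (Ideal (𝓞 F))⁰ :=
      mem_nonZeroDivisors_of_ne_zero (ne_zero_of_dvd_ne_zero hI0' hA)
    obtain ⟨Q, hQ, ⟨hσQ, hQI⟩ | hQI⟩ := exists_isPrime_and_dvd_of_smul_eq hI0' hI1 hI
    · let A : (Ideal (𝓞 F))⁰ := ⟨Q, mem_of_dvd hQI⟩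
      exact ⟨A, hQ.ne_top, hσQ, hQI, hH A hQ hσQ⟩
    · let A : (Ideal (𝓞 F))⁰ := ⟨Q * σ • Q, mem_of_dvd hQI⟩
      have hA1 : Q * σ • Q ≠ ⊤ := fun h => hQ.ne_top (top_le_iff.mp (h ▸ Ideal.mul_le_left))
      have hσA : σ • (Q * σ • Q) = Q * σ • Q := by rw [smul_mul', gal_smul_smul, mul_comm]
      have hA : ClassGroup.mk0 A = 1 :=
        (ClassGroup.mk0_eq_one_iff A.2).mpr ⟨_, mul_smul_eq_span_absNorm hσ Q⟩
      exact ⟨A, hA1, hσA, hQI, hA ▸ one_mem H⟩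
  obtain ⟨J, rfl⟩ := hAI
  have hJ0 : J ∈ (Ideal (𝓞 F))⁰ := (mul_mem_nonZeroDivisors.mp hI0).2
  have hσJ : σ • J = J := by
    rw [smul_mul', hσA] at hI
    exact mul_left_cancel₀ (nonZeroDivisors.coe_ne_zero A) hI
  have hlt : DvdNotUnit J (A * J) :=
    ⟨nonZeroDivisors.ne_zero hJ0, A, by rwa [Ideal.isUnit_iff], mul_comm _ _⟩
  exact map_mul ClassGroup.mk0 A ⟨J, hJ0⟩ ▸ mul_mem hAH (ih J hlt hJ0 hσJ)

section Ramified

variable {ι : Type*} {p : ι → ℤ} {𝔭 : ι → (Ideal (𝓞 F))⁰}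

theorem mk0_mem_closure_of_isPrime [Fintype ι] (hp : ∀ i, Prime (p i)) (hd : d = ∏ i, p i)
    (hneg : d < 0) (hd4 : d % 4 ≠ 3) (hα : α ^ 2 = d) (hσ : σ • α = -α)
    (h𝔭 : ∀ i, (𝔭 i : Ideal (𝓞 F)) ^ 2 = Ideal.span {(p i : 𝓞 F)}) {Q : (Ideal (𝓞 F))⁰}
    [(Q : Ideal (𝓞 F)).IsPrime] (hQ : σ • (Q : Ideal (𝓞 F)) = Q) :
    ClassGroup.mk0 Q ∈ Subgroup.closure (Set.range fun i => ClassGroup.mk0 (𝔭 i)) := by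
  obtain ⟨q, hq, hQq | hQq⟩ := span_eq_or_sq_eq_span_of_smul_eq
    (ne_one_of_smul_eq_neg hneg.ne hα hσ) (nonZeroDivisors.coe_ne_zero Q) hQ
  · rw [(ClassGroup.mk0_eq_one_iff Q.2).mpr ⟨q, hQq⟩]
    exact one_mem _
  · have hαQ : α ∈ (Q : Ideal (𝓞 F)) := mem_of_smul_eq_of_emod_four_ne_three hα hσ hd4
      (by rwa [absNorm_eq_of_sq_eq_span hQq]) hQ
    have hqd := dvd_of_mem_of_sq_eq_span hneg hα hσ hQq hαQ
    have hqZ : Prime (q : ℤ) := Nat.prime_iff_prime_int.mp hq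
    obtain ⟨i, -, hi⟩ := (Prime.dvd_finsetProd_iff hqZ p).mp (hd ▸ hqd)
    have hassoc := ((hqZ.associated_of_dvd (hp i) hi).map (Int.castRingHom (𝓞 F)))
    rw [eq_intCast, eq_intCast, Int.cast_natCast] at hassoc
    have hQ𝔭 : (Q : Ideal (𝓞 F)) ^ 2 = (𝔭 i : Ideal (𝓞 F)) ^ 2 := by
      rw [hQq, h𝔭, Ideal.span_singleton_eq_span_singleton.mpr hassoc]
    rw [Subtype.ext (pow_left_injective two_ne_zero hQ𝔭)]
    exact Subgroup.subset_closure ⟨i, rfl⟩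

theorem ker_powMonoidHom_two_eq_closure [Fintype ι] (hp : ∀ i, Prime (p i)) (hd : d = ∏ i, p i)
    (hneg : d < 0) (hd4 : d % 4 ≠ 3) (hα : α ^ 2 = d) (hσ : σ • α = -α)
    (h𝔭 : ∀ i, (𝔭 i : Ideal (𝓞 F)) ^ 2 = Ideal.span {(p i : 𝓞 F)}) :
    (powMonoidHom 2 : ClassGroup (𝓞 F) →* ClassGroup (𝓞 F)).ker =
      Subgroup.closure (Set.range fun i => ClassGroup.mk0 (𝔭 i)) := by
  apply le_antisymm
  · intro c hc
    obtain ⟨J, hσJ, rfl⟩ := exists_smul_eq_and_mk0_eq_of_sq_eq_one hneg hα hσ hc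
    exact mk0_mem_of_smul_eq (ne_one_of_smul_eq_neg hneg.ne hα hσ)
      (fun Q _ hσQ => mk0_mem_closure_of_isPrime hp hd hneg hd4 hα hσ h𝔭 hσQ) hσJ
  · rw [Subgroup.closure_le]
    rintro _ ⟨i, rfl⟩
    exact mk0_sq_eq_one_of_sq_eq_span (h𝔭 i)

theorem isSquare_or_isSquare_neg_of_isPrincipal_prod (hneg : d < 0) (hd' : ¬ IsSquare (-d))
    (hα : α ^ 2 = d) (hσ : σ • α = -α)
    (h𝔭 : ∀ i, (𝔭 i : Ideal (𝓞 F)) ^ 2 = Ideal.span {(p i : 𝓞 F)}) {S : Finset ι}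
    (hS : (∏ i ∈ S, (𝔭 i : Ideal (𝓞 F))).IsPrincipal) :
    IsSquare ((∏ i ∈ S, p i : ℤ) : 𝓞 F) ∨ IsSquare ((-∏ i ∈ S, p i : ℤ) : 𝓞 F) := by
  obtain ⟨z, hz⟩ := hS
  rw [Ideal.submodule_span_eq] at hz
  have hassoc : Associated (z ^ 2) ((∏ i ∈ S, p i : ℤ) : 𝓞 F) := by
    rw [← Ideal.span_singleton_eq_span_singleton, ← Ideal.span_singleton_pow, ← hz,
      Int.cast_prod, prod_sq_eq_span h𝔭]
  obtain ⟨u, hu⟩ := hassoc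
  rw [← hu, Int.cast_neg, ← hu, ← mul_neg]
  exact (isSquare_or_isSquare_neg_of_isUnit hneg hd' hα hσ u.isUnit).imp (IsSquare.sq z).mul
    (IsSquare.sq z).mul

theorem prod_mk0_eq_one_iff [Fintype ι] (hp : ∀ i, Prime (p i)) (hd : d = ∏ i, p i)
    (hneg : d < 0) (hsf : Squarefree d) (hd' : ¬ IsSquare (-d)) (hα : α ^ 2 = d)
    (hσ : σ • α = -α) (h𝔭 : ∀ i, (𝔭 i : Ideal (𝓞 F)) ^ 2 = Ideal.span {(p i : 𝓞 F)})
    (S : Finset ι) : ∏ i ∈ S, ClassGroup.mk0 (𝔭 i) = 1 ↔ S = ∅ ∨ S = Finset.univ := by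
  have hdvd : ∏ i ∈ S, p i ∣ d := hd ▸ Finset.prod_dvd_prod_of_subset _ _ _ (Finset.subset_univ S)
  rw [← map_prod, ClassGroup.mk0_eq_one_iff (Subtype.mem _), SubmonoidClass.coe_finsetProd]
  constructor
  · intro hS
    refine eq_empty_or_eq_univ_of_isUnit_or_associated_prod hp ?_
    obtain h | h := isSquare_or_isSquare_neg_of_isPrincipal_prod hneg hd' hα hσ h𝔭 hS
    · exact hd ▸ isUnit_or_associated_of_isSquare hsf hα hσ hdvd h
    · simpa [hd] using isUnit_or_associated_of_isSquare hsf hα hσ (neg_dvd.mpr hdvd) h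
  · rintro (rfl | rfl)
    · exact ⟨1, by simp⟩
    · have hsq : (∏ i, (𝔭 i : Ideal (𝓞 F))) ^ 2 = Ideal.span {α} ^ 2 := by
        rw [prod_sq_eq_span h𝔭, ← Int.cast_prod, ← hd, ← hα, Ideal.span_singleton_pow]
      exact ⟨α, pow_left_injective two_ne_zero hsq⟩

theorem card_ker_powMonoidHom_two [Fintype ι] [Nonempty ι] (hp : ∀ i, Prime (p i))
    (hd : d = ∏ i, p i) (hneg : d < 0) (hsf : Squarefree d) (hd4 : d % 4 ≠ 3) (hα : α ^ 2 = d)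
    (hσ : σ • α = -α) :
    Nat.card (powMonoidHom 2 : ClassGroup (𝓞 F) →* ClassGroup (𝓞 F)).ker =
      2 ^ (Fintype.card ι - 1) := by
  have hd' : ¬ IsSquare (-d) := by
    rintro ⟨k, hk⟩
    have hk1 := Int.isUnit_iff.mp (hsf k ⟨-1, by rw [← hk]; ring⟩)
    obtain rfl | rfl := hk1 <;> omega
  choose 𝔭 h𝔭 using fun i =>
    exists_sq_eq_span_of_dvd hsf hα (hd ▸ Finset.dvd_prod_of_mem p (Finset.mem_univ i))
  rw [ker_powMonoidHom_two_eq_closure hp hd hneg hd4 hα hσ h𝔭]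
  exact card_closure_range_eq_two_pow_of_prod_eq_one_iff
    (fun i => mk0_sq_eq_one_of_sq_eq_span (h𝔭 i))
    (prod_mk0_eq_one_iff hp hd hneg hsf hd' hα hσ h𝔭)

theorem isSquare_prod_iff [Fintype ι] (hp : ∀ i, Prime (p i)) (hd : d = ∏ i, p i)
    (hsf : Squarefree d) (hα : α ^ 2 = d) (hσ : σ • α = -α) (S : Finset ι) :
    IsSquare ((∏ i ∈ S, p i : ℤ) : 𝓞 F) ↔ S = ∅ ∨ S = Finset.univ := by
  constructor
  · intro h
    refine eq_empty_or_eq_univ_of_isUnit_or_associated_prod hp ?_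
    rw [← hd]
    refine isUnit_or_associated_of_isSquare hsf hα hσ ?_ h
    exact hd ▸ Finset.prod_dvd_prod_of_subset _ _ _ (Finset.subset_univ S)
  · rintro (rfl | rfl)
    · simp
    · rw [← hd, ← hα]
      exact .sq α

end Ramified

end QuadraticField

section Kummer

variable {F K : Type*} [Field F] [Field K] [Algebra F K]

theorem units_smul_left_injective [NeZero (2 : K)] {b : K} (hb : b ≠ 0) :
    Function.Injective fun ε : ℤˣ => ε • b := by
  have hneg : b ≠ -b := by
    rw [ne_eq, eq_neg_iff_add_eq_zero, ← two_mul]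
    exact mul_ne_zero two_ne_zero hb
  intro ε δ h
  obtain rfl | rfl := Int.units_eq_one_or ε <;> obtain rfl | rfl := Int.units_eq_one_or δ <;>
    simp_all [Units.neg_smul, hneg.symm]

theorem exists_character_of_sq_eq_algebraMap [NeZero (2 : K)] {a : F} {b : K} (hb0 : b ≠ 0)
    (hb : b ^ 2 = algebraMap F K a) : ∃ χ : Gal(K/F) →* ℤˣ, ∀ g, g • b = χ g • b := by
  have hsign (g : Gal(K/F)) : ∃ ε : ℤˣ, g • b = ε • b := by
    have hsq : (g • b) ^ 2 = b ^ 2 := by rw [← smul_pow', hb, AlgEquiv.smul_def, AlgEquiv.commutes]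
    obtain h | h := sq_eq_sq_iff_eq_or_eq_neg.mp hsq
    exacts [⟨1, by rw [h, one_smul]⟩, ⟨-1, by rw [h, Units.neg_smul, one_smul]⟩]
  choose χ hχ using hsign
  refine ⟨.mk' χ fun g h => units_smul_left_injective hb0 ?_, hχ⟩
  calc χ (g * h) • b = g • χ h • b := by rw [← hχ, mul_smul, hχ h]
    _ = (χ g * χ h) • b := by rw [smul_comm, hχ g, smul_smul, mul_comm]

theorem character_eq_one_iff_isSquare [NeZero (2 : K)] [FiniteDimensional F K] [IsGalois F K]
    {a : F} {b : K} (hb0 : b ≠ 0) (hb : b ^ 2 = algebraMap F K a) {χ : Gal(K/F) →* ℤˣ}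
    (hχ : ∀ g, g • b = χ g • b) : χ = 1 ↔ IsSquare a := by
  have hfix : χ = 1 ↔ ∀ g : Gal(K/F), g • b = b := by
    rw [MonoidHom.ext_iff]
    refine forall_congr' fun g => ?_
    rw [hχ, MonoidHom.one_apply, ← (units_smul_left_injective hb0).eq_iff, one_smul]
  rw [hfix]
  refine (IsGalois.mem_range_algebraMap_iff_fixed (F := F) b).symm.trans ?_
  constructor
  · rintro ⟨x, rfl⟩
    exact ⟨x, FaithfulSMul.algebraMap_injective F K (by rw [← hb, ← sq, map_pow])⟩
  · rintro ⟨x, rfl⟩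
    rw [← sq, map_pow, sq_eq_sq_iff_eq_or_eq_neg] at hb
    obtain rfl | rfl := hb
    exacts [⟨x, rfl⟩, ⟨-x, map_neg _ _⟩]

variable {ι : Type*} {a : ι → F} {b : ι → K} {χ : ι → Gal(K/F) →* ℤˣ}

theorem prod_characters_eq_one_iff_isSquare [NeZero (2 : K)] [FiniteDimensional F K] [IsGalois F K]
    (hb0 : ∀ i, b i ≠ 0) (hb : ∀ i, b i ^ 2 = algebraMap F K (a i))
    (hχ : ∀ i g, g • b i = χ i g • b i) (S : Finset ι) :
    ∏ i ∈ S, χ i = 1 ↔ IsSquare (∏ i ∈ S, a i) := by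
  refine character_eq_one_iff_isSquare (b := ∏ i ∈ S, b i)
    (Finset.prod_ne_zero_iff.mpr fun i _ => hb0 i) ?_ fun g => ?_
  · rw [← Finset.prod_pow, map_prod]
    exact Finset.prod_congr rfl fun i _ => hb i
  · rw [MonoidHom.finsetProd_apply, ← Finset.prod_smul, Finset.smul_prod']
    exact Finset.prod_congr rfl fun i _ => hχ i g

theorem eq_one_of_forall_character_eq_one (htop : IntermediateField.adjoin F (Set.range b) = ⊤)
    (hχ : ∀ i g, g • b i = χ i g • b i) {g : Gal(K/F)} (hg : ∀ i, χ i g = 1) : g = 1 := by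
  have hfix : ∀ x ∈ IntermediateField.adjoin F (Set.range b), g • x = x := by
    rw [IntermediateField.forall_mem_adjoin_smul_eq_self_iff, Set.forall_mem_range]
    exact fun i => by rw [hχ, hg, one_smul]
  rw [htop] at hfix
  exact AlgEquiv.ext fun x => hfix x IntermediateField.mem_top

theorem finiteDimensional_of_adjoin_range_eq_top [Finite ι]
    (htop : IntermediateField.adjoin F (Set.range b) = ⊤)
    (hb : ∀ i, b i ^ 2 = algebraMap F K (a i)) : FiniteDimensional F K := by
  have hint (x : K) (hx : x ∈ Set.range b) : IsIntegral F x := by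
    obtain ⟨i, rfl⟩ := hx
    exact .of_pow two_pos (hb i ▸ isIntegral_algebraMap)
  have := IntermediateField.finiteDimensional_adjoin hint
  rw [htop] at this
  exact Module.Finite.equiv IntermediateField.topEquiv.toLinearEquiv

theorem isGalois_of_adjoin_range_eq_top [PerfectField F] [FiniteDimensional F K]
    (htop : IntermediateField.adjoin F (Set.range b) = ⊤)
    (hb : ∀ i, b i ^ 2 = algebraMap F K (a i)) : IsGalois F K := by
  have hsplits (i : ι) : ((minpoly F (b i)).map (algebraMap F K)).Splits := by
    have hdvd : minpoly F (b i) ∣ .X ^ 2 - .C (a i) := minpoly.dvd F (b i) (by simp [hb])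
    refine .of_dvd ?_ (Polynomial.map_ne_zero (Polynomial.X_pow_sub_C_ne_zero two_pos (a i)))
      (Polynomial.map_dvd _ hdvd)
    rw [Polynomial.map_sub, Polynomial.map_pow, Polynomial.map_X, Polynomial.map_C, ← hb,
      Polynomial.C_pow, sq_sub_sq]
    exact (Polynomial.Splits.X_add_C _).mul (Polynomial.Splits.X_sub_C _)
  have : Normal F K := by
    refine normal_iff.mpr fun x => ⟨Algebra.IsIntegral.isIntegral x, ?_⟩
    refine IntermediateField.splits_of_mem_adjoin F K (S := Set.range b) ?_
      (htop ▸ IntermediateField.mem_top)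
    rintro _ ⟨i, rfl⟩
    exact ⟨Algebra.IsIntegral.isIntegral _, hsplits i⟩
  exact {}

theorem nonempty_gal_mulEquiv_of_isSquare_prod_iff [CharZero F] [Fintype ι] [Nonempty ι]
    (htop : IntermediateField.adjoin F (Set.range b) = ⊤) (ha : ∀ i, a i ≠ 0)
    (hb : ∀ i, b i ^ 2 = algebraMap F K (a i))
    (hsq : ∀ S : Finset ι, IsSquare (∏ i ∈ S, a i) ↔ S = ∅ ∨ S = Finset.univ) :
    Nonempty (Gal(K/F) ≃* (Fin (Fintype.card ι - 1) → Multiplicative (ZMod 2))) := by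
  have : CharZero K := charZero_of_injective_algebraMap (algebraMap F K).injective
  have := finiteDimensional_of_adjoin_range_eq_top htop hb
  have := isGalois_of_adjoin_range_eq_top htop hb
  have hb0 (i : ι) : b i ≠ 0 := by
    rw [← sq_eq_zero_iff.ne, hb, ne_eq, map_eq_zero]
    exact ha i
  choose χ hχ using fun i => exists_character_of_sq_eq_algebraMap (hb0 i) (hb i)
  exact nonempty_mulEquiv_pi_of_prod_characters_eq_one_iff
    (fun _ => eq_one_of_forall_character_eq_one htop hχ)
    fun S => (prod_characters_eq_one_iff_isSquare hb0 hb hχ S).trans (hsq S)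

theorem adjoin_range_subtype_eq_top (β : ι → K) :
    IntermediateField.adjoin F (Set.range fun i =>
      (⟨β i, IntermediateField.subset_adjoin F _ ⟨i, rfl⟩⟩ :
        IntermediateField.adjoin F (Set.range β))) = ⊤ := by
  rw [← IntermediateField.lift_inj, IntermediateField.lift_adjoin, IntermediateField.lift_top,
    ← Set.range_comp]
  rfl

end Kummer

theorem stmt11_general {ι : Type*} [Fintype ι] {F Ω : Type*} [Field F] [NumberField F] [Field Ω]
    [Algebra F Ω] {p : ι → ℤ} (hp : ∀ i, Prime (p i)) {d : ℤ} (hd : d = ∏ i, p i) (hneg : d < 0)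
    (hsf : Squarefree d) (hd4 : d % 4 ≠ 3) (hdim : Module.finrank ℚ F = 2) {α : F}
    (hα : α ^ 2 = (d : F)) {β : ι → Ω} (hβ : ∀ i, β i ^ 2 = algebraMap F Ω (p i : F)) :
    Nonempty ((ClassGroup (𝓞 F) ⧸
        (powMonoidHom 2 : ClassGroup (𝓞 F) →* ClassGroup (𝓞 F)).range)
      ≃* (Fin (Fintype.card ι - 1) → Multiplicative (ZMod 2))) ∧
    Nonempty ((ClassGroup (𝓞 F) ⧸
        (powMonoidHom 2 : ClassGroup (𝓞 F) →* ClassGroup (𝓞 F)).range)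
      ≃* Gal(IntermediateField.adjoin F (Set.range β)/F)) := by
  have : Algebra.IsQuadraticExtension ℚ F := ⟨hdim⟩
  have : Nonempty ι := by
    by_contra! h
    simp [hd] at hneg
  obtain ⟨α, rfl⟩ := IsIntegrallyClosed.exists_algebraMap_eq_of_isIntegral_pow (R := 𝓞 F) two_pos
    (by rw [hα, ← map_intCast (algebraMap (𝓞 F) F)]; exact isIntegral_algebraMap)
  have hα : α ^ 2 = d := RingOfIntegers.coe_injective (by rw [map_pow, hα, map_intCast])
  obtain ⟨σ, hσ⟩ := exists_smul_eq_neg_of_not_isSquare hα fun h => hneg.not_ge h.nonneg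
  obtain ⟨e⟩ := nonempty_mulEquiv_pi_zmod_of_card_eq quotient_range_powMonoidHom_pow_eq_one
    (Subgroup.index_range.trans (card_ker_powMonoidHom_two hp hd hneg hsf hd4 hα hσ))
  have hsq (S : Finset ι) : IsSquare (∏ i ∈ S, (p i : F)) ↔ S = ∅ ∨ S = Finset.univ := by
    rw [← isSquare_prod_iff hp hd hsf hα hσ S, ← isSquare_algebraMap_iff (R := 𝓞 F) (K := F),
      map_intCast, Int.cast_prod]
  obtain ⟨e'⟩ := nonempty_gal_mulEquiv_of_isSquare_prod_iff (adjoin_range_subtype_eq_top β)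
    (fun i => Int.cast_ne_zero.mpr (hp i).ne_zero) (fun i => Subtype.ext (hβ i)) hsq
  exact ⟨⟨e⟩, ⟨e.trans e'.symm⟩⟩

/-- Gauss genus theory: for `F = ℚ(√d)` with `d = p₁⋯p_r < 0` squarefree,
`d ≡ 1 (mod 4)`, each `p_i` a signed prime, one has
`cl(F)/2 ≅ (ℤ/2)^{r-1}`, and `cl(F)/2 ≅ Gal(F(√p₁,…,√p_r)/F)`. -/
theorem stmt11 (F Ω : Type) [Field F] [NumberField F] [Field Ω] [Algebra F Ω]
    (r : ℕ) (p : Fin r → ℤ) (hp : ∀ i, Prime (p i))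
    (d : ℤ) (hd : d = ∏ i, p i) (hneg : d < 0) (hsf : Squarefree d) (hd4 : d % 4 = 1)
    (hdim : Module.finrank ℚ F = 2) (α : F) (hα : α ^ 2 = (d : F))
    (β : Fin r → Ω) (hβ : ∀ i, β i ^ 2 = algebraMap F Ω ((p i : F))) :
    Nonempty ((ClassGroup (𝓞 F) ⧸
        (powMonoidHom 2 : ClassGroup (𝓞 F) →* ClassGroup (𝓞 F)).range)
      ≃* (Fin (r - 1) → Multiplicative (ZMod 2))) ∧
    Nonempty ((ClassGroup (𝓞 F) ⧸
        (powMonoidHom 2 : ClassGroup (𝓞 F) →* ClassGroup (𝓞 F)).range)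
      ≃* ((IntermediateField.adjoin F (Set.range β)) ≃ₐ[F]
          (IntermediateField.adjoin F (Set.range β)))) := by
  have h := stmt11_general hp hd hneg hsf (by lia) hdim hα hβ
  rwa [Fintype.card_fin] at h
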